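/- arXiv:2508.09795 — 4 statements merged into one kernel-verified Lean document; each statement's English description precedes it below -/
import Mathlib

section
/- The function d̂ is a metric on X̂, and for all x, y ∈ X̂ one has (1/4) d_a(x,y) ≤ d̂(x,y) ≤ d_a(x,y). -/
open Metric Set MeasureTheory Filter
open scoped ENNReal NNReal

noncomputable section

variable {X : Type*}

/-- The quasimetric `d_a` on the sphericalization `X̂ = X ∪ {∞}`, with `none` playing
the role of the point `∞`. -/
noncomputable def sphDist [MetricSpace X] (a : X) : Option X → Option X → ℝ
  | some x, some y => dist x y / ((1 + dist x a) * (1 + dist y a))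
  | some x, none => 1 / (1 + dist x a)
  | none, some y => 1 / (1 + dist y a)
  | none, none => 0

/-- The sum `Σ_{j=1}^k d_a(x_{j-1}, x_j)` along a finite sequence (list) in `X̂`. -/
noncomputable def chainSum [MetricSpace X] (a : X) : List (Option X) → ℝ
  | [] => 0
  | [_] => 0
  | x :: y :: l => sphDist a x y + chainSum a (y :: l)

/-- The sphericalized distance `d̂(x,y) = inf Σ_{j=1}^k d_a(x_{j-1},x_j)`, the infimum
being taken over all finite sequences `x = x_0, x_1, …, x_k = y` in `X̂`. -/
noncomputable def sphHatDist [MetricSpace X] (a : X) (x y : Option X) : ℝ :=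
  sInf {s : ℝ | ∃ L : List (Option X),
    L.head? = some x ∧ L.getLast? = some y ∧ chainSum a L = s}

/-- `d̂(x) = d̂(x,∞) = 1/(1+|x|)` for `x ∈ X`. -/
noncomputable def sphD [MetricSpace X] (a x : X) : ℝ := 1 / (1 + dist x a)

/-- The weight `1/(1+|x|)` on `X̂`, vanishing at `∞`. -/
noncomputable def sphWeight [MetricSpace X] (a : X) : Option X → ℝ
  | some x => 1 / (1 + dist x a)
  | none => 0

lemma sphWeight_some_pos [MetricSpace X] (a x : X) : 0 < sphWeight a (some x) := by
  simp only [sphWeight]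
  positivity

lemma sphWeight_nonneg [MetricSpace X] (a : X) (x : Option X) : 0 ≤ sphWeight a x := by
  cases x with
  | none => exact le_rfl
  | some x => exact (sphWeight_some_pos a x).le

lemma sphDist_some_some [MetricSpace X] (a x y : X) :
    sphDist a (some x) (some y) =
      dist x y * (sphWeight a (some x) * sphWeight a (some y)) := by
  simp only [sphDist, sphWeight]
  field_simp

lemma sphDist_nonneg [MetricSpace X] (a : X) (x y : Option X) : 0 ≤ sphDist a x y := by
  cases x <;> cases y <;> simp only [sphDist] <;> positivity

lemma sphDist_self [MetricSpace X] (a : X) (x : Option X) : sphDist a x x = 0 := by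
  cases x <;> simp [sphDist]

lemma sphDist_comm [MetricSpace X] (a : X) (x y : Option X) :
    sphDist a x y = sphDist a y x := by
  cases x <;> cases y <;> simp only [sphDist]
  rw [dist_comm, mul_comm]

lemma eq_of_sphDist_eq_zero [MetricSpace X] (a : X) {x y : Option X}
    (h : sphDist a x y = 0) : x = y := by
  cases x with
  | none =>
    cases y with
    | none => rfl
    | some y => exact absurd h (sphWeight_some_pos a y).ne'
  | some x =>
    cases y with
    | none => exact absurd h (sphWeight_some_pos a x).ne'
    | some y =>
      rw [sphDist_some_some] at h
      have hw := mul_pos (sphWeight_some_pos a x) (sphWeight_some_pos a y)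
      exact congrArg some (dist_eq_zero.1 ((mul_eq_zero.1 h).resolve_right hw.ne'))

lemma abs_sphWeight_sub_le [MetricSpace X] (a : X) (x y : Option X) :
    |sphWeight a x - sphWeight a y| ≤ sphDist a x y := by
  cases x with
  | none =>
    cases y with
    | none => simp [sphWeight, sphDist]
    | some y => simp [sphWeight, sphDist, abs_of_nonneg, add_nonneg]
  | some x =>
    cases y with
    | none => simp [sphWeight, sphDist, abs_of_nonneg, add_nonneg]
    | some y =>
      have hx : 0 < 1 + dist x a := by positivity
      have hy : 0 < 1 + dist y a := by positivity
      have h : sphWeight a (some x) - sphWeight a (some y) =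
          (dist y a - dist x a) / ((1 + dist x a) * (1 + dist y a)) := by
        simp only [sphWeight]
        field_simp
        ring
      rw [h, abs_div, abs_of_pos (mul_pos hx hy)]
      simp only [sphDist]
      gcongr
      rw [dist_comm x y]
      exact abs_dist_sub_le y x a

lemma sphDist_le_sphWeight_add [MetricSpace X] (a : X) (x y : Option X) :
    sphDist a x y ≤ sphWeight a x + sphWeight a y := by
  cases x with
  | none => cases y <;> simp [sphWeight, sphDist]
  | some x =>
    cases y with
    | none => simp [sphWeight, sphDist]
    | some y =>
      have hx : 0 < 1 + dist x a := by positivity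
      have hy : 0 < 1 + dist y a := by positivity
      have h : sphWeight a (some x) + sphWeight a (some y) =
          ((1 + dist x a) + (1 + dist y a)) / ((1 + dist x a) * (1 + dist y a)) := by
        simp only [sphWeight]
        field_simp
        ring
      rw [h]
      simp only [sphDist]
      gcongr
      linarith [dist_triangle_right x y a]

lemma chainSum_nonneg [MetricSpace X] (a : X) : ∀ L : List (Option X), 0 ≤ chainSum a L
  | [] => le_rfl
  | [_] => le_rfl
  | x :: y :: l => add_nonneg (sphDist_nonneg a x y) (chainSum_nonneg a (y :: l))

lemma chainSum_append_cons [MetricSpace X] (a : X) (y : Option X) (t : List (Option X)) :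
    ∀ L : List (Option X),
      chainSum a (L ++ y :: t) = chainSum a (L ++ [y]) + chainSum a (y :: t)
  | [] => by simp [chainSum]
  | [x] => by simp [chainSum]
  | x :: z :: l => by
    have ih := chainSum_append_cons a y t (z :: l)
    simp only [List.cons_append, chainSum] at ih ⊢
    rw [ih, add_assoc]

lemma chainSum_reverse [MetricSpace X] (a : X) :
    ∀ L : List (Option X), chainSum a L.reverse = chainSum a L
  | [] => rfl
  | [_] => rfl
  | x :: y :: l => by
    have ih := chainSum_reverse a (y :: l)
    rw [List.reverse_cons] at ih
    rw [List.reverse_cons, List.reverse_cons, List.append_assoc, List.singleton_append,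
      chainSum_append_cons, ih]
    simp only [chainSum]
    rw [sphDist_comm a y x]
    ring

lemma abs_sphWeight_sub_add_le_chainSum [MetricSpace X] (a : X) {y : Option X} :
    ∀ (L : List (Option X)) {x z : Option X}, L.head? = some x → L.getLast? = some y → z ∈ L →
      |sphWeight a x - sphWeight a z| + |sphWeight a z - sphWeight a y| ≤ chainSum a L
  | [], x, z, _, _, hz => by simp at hz
  | [w], x, z, hx, hy, hz => by
    simp only [List.head?_cons, List.getLast?_singleton, Option.some.injEq,
      List.mem_singleton] at hx hy hz
    subst hx hy hz
    simp [chainSum]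
  | w :: v :: l, x, z, hx, hy, hz => by
    simp only [List.head?_cons, Option.some.injEq] at hx
    subst hx
    rw [List.getLast?_cons_cons] at hy
    have hwv := abs_sphWeight_sub_le a w v
    simp only [chainSum]
    rcases List.mem_cons.1 hz with rfl | hz
    · have ih := abs_sphWeight_sub_add_le_chainSum a (v :: l) List.head?_cons hy
        List.mem_cons_self
      have := abs_sub_le (sphWeight a z) (sphWeight a v) (sphWeight a y)
      simp only [sub_self, abs_zero, zero_add] at ih ⊢
      linarith
    · have ih := abs_sphWeight_sub_add_le_chainSum a (v :: l) List.head?_cons hy hz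
      linarith [abs_sub_le (sphWeight a w) (sphWeight a v) (sphWeight a z)]

lemma dist_mul_sq_le_chainSum [MetricSpace X] (a : X) {m : ℝ} (hm : 0 < m) {y : X} :
    ∀ (L : List (Option X)) {x : X}, L.head? = some (some x) → L.getLast? = some (some y) →
      (∀ z ∈ L, m ≤ sphWeight a z) → dist x y * (m * m) ≤ chainSum a L
  | [], x, hx, _, _ => by simp at hx
  | [w], x, hx, hy, _ => by
    simp only [List.head?_cons, List.getLast?_singleton, Option.some.injEq] at hx hy
    subst hx
    cases hy
    simp [chainSum]
  | w :: none :: l, x, _, _, h => by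
    have := h none (by simp)
    simp only [sphWeight] at this
    linarith
  | w :: some v :: l, x, hx, hy, h => by
    simp only [List.head?_cons, Option.some.injEq] at hx
    subst hx
    rw [List.getLast?_cons_cons] at hy
    have ih := dist_mul_sq_le_chainSum a hm (some v :: l) List.head?_cons hy
      fun z hz => h z (List.mem_cons_of_mem _ hz)
    have hxv : dist x v * (m * m) ≤ sphDist a (some x) (some v) := by
      rw [sphDist_some_some]
      exact mul_le_mul_of_nonneg_left
        (mul_le_mul (h _ (by simp)) (h _ (by simp)) hm.le (sphWeight_nonneg _ _)) dist_nonneg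
    have := mul_le_mul_of_nonneg_right (dist_triangle x v y) (mul_pos hm hm).le
    simp only [chainSum]
    linarith

lemma quarter_sphDist_le_chainSum [MetricSpace X] (a : X) {x y : Option X}
    {L : List (Option X)} (hx : L.head? = some x) (hy : L.getLast? = some y) :
    1 / 4 * sphDist a x y ≤ chainSum a L := by
  set m := max (sphWeight a x) (sphWeight a y) / 2 with hm
  have hxm : sphWeight a x ≤ 2 * m := by linarith [le_max_left (sphWeight a x) (sphWeight a y)]
  have hym : sphWeight a y ≤ 2 * m := by linarith [le_max_right (sphWeight a x) (sphWeight a y)]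
  by_cases hL : ∀ z ∈ L, m ≤ sphWeight a z
  · have hmx := hL x (List.mem_of_head? hx)
    have hmy := hL y (List.mem_of_getLast? hy)
    cases x with
    | none =>
      have := sphDist_le_sphWeight_add a none y
      have := chainSum_nonneg a L
      have : sphWeight a none = 0 := rfl
      linarith
    | some x =>
      have hm0 : 0 < m := by linarith [sphWeight_some_pos a x]
      cases y with
      | none =>
        have : sphWeight a none = 0 := rfl
        linarith
      | some y =>
        refine le_trans ?_ (dist_mul_sq_le_chainSum a hm0 L hx hy hL)
        rw [sphDist_some_some]
        have := mul_le_mul_of_nonneg_left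
          (mul_le_mul hxm hym (sphWeight_nonneg _ _) (by positivity))
          (dist_nonneg (x := x) (y := y))
        linarith
  · push Not at hL
    obtain ⟨z, hz, hzm⟩ := hL
    have h := abs_sphWeight_sub_add_le_chainSum a L hx hy hz
    have hd := sphDist_le_sphWeight_add a x y
    have h1 := le_abs_self (sphWeight a x - sphWeight a z)
    have h2 := neg_abs_le (sphWeight a z - sphWeight a y)
    have h3 := abs_nonneg (sphWeight a x - sphWeight a z)
    have h4 := abs_nonneg (sphWeight a z - sphWeight a y)
    rcases max_choice (sphWeight a x) (sphWeight a y) with h5 | h5 <;> rw [h5] at hm <;> linarith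

lemma sphHatDist_le_chainSum [MetricSpace X] (a : X) {x y : Option X}
    {L : List (Option X)} (hx : L.head? = some x) (hy : L.getLast? = some y) :
    sphHatDist a x y ≤ chainSum a L := by
  refine csInf_le ⟨0, ?_⟩ ⟨L, hx, hy, rfl⟩
  rintro _ ⟨L, -, -, rfl⟩
  exact chainSum_nonneg a L

lemma le_sphHatDist [MetricSpace X] (a : X) {x y : Option X} {c : ℝ}
    (h : ∀ L : List (Option X), L.head? = some x → L.getLast? = some y → c ≤ chainSum a L) :
    c ≤ sphHatDist a x y := by
  refine le_csInf ⟨_, [x, y], rfl, rfl, rfl⟩ ?_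
  rintro _ ⟨L, hx, hy, rfl⟩
  exact h L hx hy

lemma sphHatDist_le_sphDist [MetricSpace X] (a : X) (x y : Option X) :
    sphHatDist a x y ≤ sphDist a x y := by
  simpa [chainSum] using sphHatDist_le_chainSum a (L := [x, y]) rfl rfl

lemma quarter_sphDist_le_sphHatDist [MetricSpace X] (a : X) (x y : Option X) :
    1 / 4 * sphDist a x y ≤ sphHatDist a x y :=
  le_sphHatDist a fun _ hx hy => quarter_sphDist_le_chainSum a hx hy

lemma sphHatDist_comm_le [MetricSpace X] (a : X) (x y : Option X) :
    sphHatDist a x y ≤ sphHatDist a y x :=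
  le_sphHatDist a fun L hy hx => chainSum_reverse a L ▸
    sphHatDist_le_chainSum a (List.head?_reverse.trans hx) (List.getLast?_reverse.trans hy)

lemma sphHatDist_le_chainSum_add_chainSum [MetricSpace X] (a : X) {x y z : Option X}
    {L M : List (Option X)} (hLx : L.head? = some x) (hLy : L.getLast? = some y)
    (hMy : M.head? = some y) (hMz : M.getLast? = some z) :
    sphHatDist a x z ≤ chainSum a L + chainSum a M := by
  obtain ⟨l, rfl⟩ := List.getLast?_eq_some_iff.1 hLy
  obtain ⟨t, rfl⟩ := List.head?_eq_some_iff.1 hMy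
  rw [← chainSum_append_cons]
  refine sphHatDist_le_chainSum a ?_ ?_
  · cases l <;> simpa using hLx
  · rw [List.getLast?_append, hMz, Option.some_or]

lemma sphHatDist_triangle [MetricSpace X] (a : X) (x y z : Option X) :
    sphHatDist a x z ≤ sphHatDist a x y + sphHatDist a y z := by
  rw [← sub_le_iff_le_add]
  refine le_sphHatDist a fun L hLx hLy => ?_
  rw [sub_le_iff_le_add, ← sub_le_iff_le_add']
  refine le_sphHatDist a fun M hMy hMz => ?_
  rw [sub_le_iff_le_add']
  exact sphHatDist_le_chainSum_add_chainSum a hLx hLy hMy hMz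

/-- `d̂` is a metric on `X̂` and `(1/4) d_a(x,y) ≤ d̂(x,y) ≤ d_a(x,y)`
for all `x, y ∈ X̂`. -/
theorem statement0 [MetricSpace X]
    (hX : ¬ Bornology.IsBounded (Set.univ : Set X)) (a : X) :
    (∀ x : Option X, sphHatDist a x x = 0) ∧
    (∀ x y : Option X, sphHatDist a x y = sphHatDist a y x) ∧
    (∀ x y z : Option X,
      sphHatDist a x z ≤ sphHatDist a x y + sphHatDist a y z) ∧
    (∀ x y : Option X, sphHatDist a x y = 0 → x = y) ∧
    (∀ x y : Option X,
      (1 / 4) * sphDist a x y ≤ sphHatDist a x y ∧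
        sphHatDist a x y ≤ sphDist a x y) := by
  refine ⟨fun x => le_antisymm ?_ ?_, fun x y => (sphHatDist_comm_le a x y).antisymm
    (sphHatDist_comm_le a y x), sphHatDist_triangle a, fun x y h => ?_, fun x y =>
    ⟨quarter_sphDist_le_sphHatDist a x y, sphHatDist_le_sphDist a x y⟩⟩
  · exact (sphHatDist_le_sphDist a x x).trans_eq (sphDist_self a x)
  · exact le_sphHatDist a fun L _ _ => chainSum_nonneg a L
  · refine eq_of_sphDist_eq_zero a (le_antisymm ?_ (sphDist_nonneg a x y))
    linarith [quarter_sphDist_le_sphHatDist a x y]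
end
end

section
/- For every r > 0 one has B̂(∞, r) = X̂ \ B̄(a, 1/r − 1), where B̄(a, ρ) = {y ∈ X : d(y,a) ≤ ρ} (which is empty when ρ < 0). -/
open Metric Set MeasureTheory Filter
open scoped ENNReal NNReal

noncomputable section

variable {X : Type*}

/-- The triangle inequality for `d_a` with first vertex `∞`. -/
theorem sphDist_none_triangle [MetricSpace X] (a : X) (x y : Option X) :
    sphDist a none y ≤ sphDist a none x + sphDist a x y := by
  rcases x with _ | x
  · simp [sphDist]
  rcases y with _ | y
  · simp only [sphDist]
    positivity
  simp only [sphDist]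
  have hx : 0 < 1 + dist x a := by positivity
  have hy : 0 < 1 + dist y a := by positivity
  have htri : dist x a ≤ dist x y + dist y a := dist_triangle x y a
  rw [div_add_div _ _ hx.ne' (mul_pos hx hy).ne', div_le_div_iff₀ hy (by positivity)]
  nlinarith [mul_nonneg (mul_pos hx hy).le (sub_nonneg.2 htri)]

/-- Along any chain, the `d_a`-distance to `∞` grows by at most the length of the chain. -/
theorem sphDist_none_le_add_chainSum [MetricSpace X] (a : X) {x y : Option X}
    {L : List (Option X)} (hhead : L.head? = some x) (hlast : L.getLast? = some y) :
    sphDist a none y ≤ sphDist a none x + chainSum a L := by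
  induction L generalizing x with
  | nil => simp at hhead
  | cons z l ih =>
    obtain rfl : z = x := by simpa using hhead
    cases l with
    | nil =>
      obtain rfl : z = y := by simpa using hlast
      simp [chainSum]
    | cons w l =>
      have hrest := ih (x := w) rfl (by simpa using hlast)
      have hstep := sphDist_none_triangle a z w
      simp only [chainSum]
      linarith

theorem sphHatDist_none_left [MetricSpace X] (a : X) (y : Option X) :
    sphHatDist a none y = sphDist a none y := by
  refine IsLeast.csInf_eq ⟨⟨[none, y], rfl, rfl, by simp [chainSum]⟩, ?_⟩
  rintro _ ⟨L, hhead, hlast, rfl⟩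
  simpa [sphDist] using sphDist_none_le_add_chainSum a hhead hlast

/-- For every `r > 0` one has
`B̂(∞, r) = X̂ \ B̄(a, 1/r − 1)`, where `B̄(a,ρ) = {y ∈ X : d(y,a) ≤ ρ}`
(empty when `ρ < 0`). -/
theorem statement6 [MetricSpace X]
    (hX : ¬ Bornology.IsBounded (Set.univ : Set X)) (a : X)
    (r : ℝ) (hr : 0 < r) :
    {y : Option X | sphHatDist a none y < r} =
      Set.univ \ (Option.some '' Metric.closedBall a (1 / r - 1)) := by
  ext y
  rcases y with _ | y
  · simpa [sphHatDist_none_left, sphDist] using hr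
  · have hy : 0 < 1 + dist y a := by positivity
    simp only [mem_ofPred_eq, sphHatDist_none_left, sphDist, Set.mem_sdiff, mem_univ, true_and,
      (Option.some_injective X).mem_set_image, mem_closedBall, not_le]
    rw [one_div_lt hy hr, sub_lt_iff_lt_add']
end
end

section
/- For every x ∈ X and every r with 0 < r ≤ d̂(x)/3, one has B(x, 3r/(4 d̂(x)^2)) ⊂ B_a(x,r) ⊂ B(x, 3r/(2 d̂(x)^2)), where the outer balls are balls in (X,d) regarded as subsets of X̂. -/
open Metric Set MeasureTheory Filter
open scoped ENNReal NNReal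

noncomputable section

variable {X : Type*}

/-- For `x ∈ X` and `0 < r ≤ d̂(x)/3` one has
`B(x, 3r/(4 d̂(x)²)) ⊂ B_a(x,r) ⊂ B(x, 3r/(2 d̂(x)²))`, the outer balls being balls
in `(X,d)` regarded as subsets of `X̂`. -/
theorem statement7 [MetricSpace X]
    (hX : ¬ Bornology.IsBounded (Set.univ : Set X)) (a : X)
    (x : X) (r : ℝ) (hr : 0 < r) (hr3 : r ≤ sphD a x / 3) :
    Option.some '' Metric.ball x (3 * r / (4 * (sphD a x) ^ 2)) ⊆
      {y : Option X | sphDist a (some x) y < r} ∧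
    {y : Option X | sphDist a (some x) y < r} ⊆
      Option.some '' Metric.ball x (3 * r / (2 * (sphD a x) ^ 2)) := by
  have hD : 0 < 1 + dist x a := by positivity
  have hrD : r * (1 + dist x a) ≤ 1 / 3 := by
    have h := mul_le_mul_of_nonneg_right hr3 hD.le
    have hcancel : sphD a x / 3 * (1 + dist x a) = 1 / 3 := by
      unfold sphD
      field_simp
    rwa [hcancel] at h
  have hinner : 3 * r / (4 * (sphD a x) ^ 2) = 3 / 4 * (r * (1 + dist x a) ^ 2) := by
    unfold sphD
    field_simp
  have houter : 3 * r / (2 * (sphD a x) ^ 2) = 3 / 2 * (r * (1 + dist x a) ^ 2) := by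
    unfold sphD
    field_simp
  rw [hinner, houter]
  constructor
  · rintro _ ⟨y, hy, rfl⟩
    rw [mem_ball, dist_comm] at hy
    have hE : 0 < 1 + dist y a := by positivity
    have htri : dist x a ≤ dist x y + dist y a := dist_triangle x y a
    rw [mem_ofPred_eq, sphDist, div_lt_iff₀ (mul_pos hD hE)]
    have hsq : r * (1 + dist x a) ^ 2 ≤ 1 / 3 * (1 + dist x a) := by
      nlinarith
    have hlow : 3 / 4 * (1 + dist x a) ≤ 1 + dist y a := by linarith
    nlinarith [mul_le_mul_of_nonneg_left hlow (mul_pos hr hD).le]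
  · rintro (_ | y) hy
    · change 1 / (1 + dist x a) < r at hy
      rw [div_lt_iff₀ hD] at hy
      linarith
    · have hE : 0 < 1 + dist y a := by positivity
      have htri : dist y a ≤ dist x y + dist x a := by
        rw [dist_comm x y]
        exact dist_triangle y x a
      rw [mem_ofPred_eq, sphDist, div_lt_iff₀ (mul_pos hD hE)] at hy
      refine ⟨y, ?_, rfl⟩
      rw [mem_ball, dist_comm]
      have hup : 1 + dist y a ≤ (1 + dist x a) + dist x y := by linarith
      nlinarith [mul_le_mul_of_nonneg_left hup (mul_pos hr hD).le,
        mul_le_mul_of_nonneg_right hrD (dist_nonneg (x := x) (y := y))]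
end
end

section
/- Assume that X is uniformly perfect at a for radii ≥ 1 with constant κ, that μ is doubling, and that for some q > 0 the measure μ̂_q is doubling on (X̂, d̂). Then there exist 0 < s < q and C_s > 0 such that μ(B(a,r))/μ(B(a,R)) ≥ C_s (r/R)^s whenever 1 ≤ r ≤ R < ∞. -/
open Metric Set MeasureTheory Filter
open scoped ENNReal NNReal

noncomputable section

variable {X : Type*}

/-- `d̂(x) = d̂(x,∞)` on all of `X̂`, with the convention `d̂(∞) = 0`. -/
noncomputable def sphDhat [MetricSpace X] (a : X) : Option X → ℝ
  | none => 0
  | some x => sphD a x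

/-- The sphericalized measure `μ̂_q` on `X̂`: `dμ̂_q(x) = (1+|x|)^{-q} dμ(x)` on `X`,
and `μ̂_q({∞}) = 0`.  Here `sphMeas a q μ S` is the value `μ̂_q(S)` for `S ⊆ X̂`. -/
noncomputable def sphMeas [MetricSpace X] [MeasurableSpace X] (a : X) (q : ℝ)
    (μ : Measure X) (S : Set (Option X)) : ℝ≥0∞ :=
  ∫⁻ x in (Option.some ⁻¹' S), ENNReal.ofReal (((1 + dist x a) ^ q)⁻¹) ∂μ

/-- The distance to `∞` is `1`-Lipschitz for the quasimetric `d_a`. -/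
theorem abs_sphDhat_sub_le_sphDist [MetricSpace X] (a : X) (x y : Option X) :
    |sphDhat a x - sphDhat a y| ≤ sphDist a x y := by
  have key : ∀ z : X, 0 < 1 + dist z a := fun z => by positivity
  rcases x with _ | x <;> rcases y with _ | y
  · simp [sphDhat, sphDist]
  · have := key y
    simp only [sphDhat, sphDist, sphD, zero_sub, abs_neg]
    rw [abs_of_pos (by positivity)]
  · have := key x
    simp only [sphDhat, sphDist, sphD, sub_zero]
    rw [abs_of_pos (by positivity)]
  · have hx := key x
    have hy := key y
    simp only [sphDhat, sphDist, sphD]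
    rw [div_sub_div _ _ hx.ne' hy.ne', abs_div, abs_of_pos (mul_pos hx hy)]
    gcongr
    have h1 := dist_triangle x y a
    have h2 := dist_triangle_left y a x
    rw [abs_le]
    constructor <;> linarith

theorem abs_sphDhat_sub_le_chainSum [MetricSpace X] (a : X) (L : List (Option X)) :
    ∀ x y : Option X, L.head? = some x → L.getLast? = some y →
      |sphDhat a x - sphDhat a y| ≤ chainSum a L := by
  induction L with
  | nil => intro x y hx; simp at hx
  | cons u l ih =>
    intro x y hx hy
    obtain rfl : u = x := by simpa using hx
    cases l with
    | nil =>
      obtain rfl : u = y := by simpa using hy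
      simp [chainSum]
    | cons v l =>
      have h1 := ih v y (by simp) (by simpa using hy)
      have h2 := abs_sphDhat_sub_le_sphDist a u v
      have h3 := abs_sub_le (sphDhat a u) (sphDhat a v) (sphDhat a y)
      simp only [chainSum]
      linarith

theorem abs_sphDhat_sub_le_sphHatDist [MetricSpace X] (a : X) (x y : Option X) :
    |sphDhat a x - sphDhat a y| ≤ sphHatDist a x y := by
  refine le_csInf ⟨_, [x, y], by simp, by simp, rfl⟩ ?_
  rintro s ⟨L, hx, hy, rfl⟩
  exact abs_sphDhat_sub_le_chainSum a L x y hx hy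

/-- Joining two points through `∞` bounds their sphericalized distance. -/
theorem sphHatDist_some_le [MetricSpace X] (a x y : X) :
    sphHatDist a (some x) (some y) ≤ sphD a x + sphD a y := by
  refine csInf_le ⟨0, ?_⟩ ⟨[some x, none, some y], by simp, by simp, ?_⟩
  · rintro s ⟨L, hx, hy, rfl⟩
    exact (abs_nonneg _).trans (abs_sphDhat_sub_le_chainSum a L _ _ hx hy)
  · simp [chainSum, sphDist, sphD]

/-- The mass `μ̂_q` gives to the points of `X` with `1 + |x| ≥ t`. -/
def sphTail [MetricSpace X] [MeasurableSpace X] (a : X) (q : ℝ) (μ : Measure X) (t : ℝ) :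
    ℝ≥0∞ :=
  ∫⁻ x in {x | t ≤ 1 + dist x a}, ENNReal.ofReal (((1 + dist x a) ^ q)⁻¹) ∂μ

theorem sphTail_anti [MetricSpace X] [MeasurableSpace X] (a : X) (q : ℝ) (μ : Measure X) :
    Antitone (sphTail a q μ) := fun _ _ h =>
  lintegral_mono_set fun _ hx => h.trans hx

/-- Doubling of `μ̂_q` at `x ∈ X` bounds the tail beyond `(1 + |x|)/2` by the mass of an annulus
around `|x|`. -/
theorem sphTail_le_annulus [MetricSpace X] [MeasurableSpace X] (a : X) (μ : Measure X)
    (q Chat : ℝ) (hChat : 1 < Chat)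
    (hdoubhat : ∀ (x : Option X) (r : ℝ), 0 < r →
      sphMeas a q μ {y : Option X | sphHatDist a x y < 2 * r} ≤
        ENNReal.ofReal Chat * sphMeas a q μ {y : Option X | sphHatDist a x y < r}) (x : X) :
    sphTail a q μ ((1 + dist x a) / 2) ≤ ENNReal.ofReal (Chat ^ 3) *
      ∫⁻ y in {y | (1 + dist x a) / 2 ≤ 1 + dist y a ∧ 1 + dist y a < 2 * (1 + dist x a)},
        ENNReal.ofReal (((1 + dist y a) ^ q)⁻¹) ∂μ := by
  set ρ := sphD a x with hρ
  have hT : 0 < 1 + dist x a := by positivity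
  have hρpos : 0 < ρ := by rw [hρ, sphD]; positivity
  have h1 : sphTail a q μ ((1 + dist x a) / 2) ≤
      sphMeas a q μ {y : Option X | sphHatDist a (some x) y < 2 * (2 * (2 * (ρ / 2)))} := by
    refine lintegral_mono_set fun y hy => ?_
    have hy' : (1 + dist x a) / 2 ≤ 1 + dist y a := hy
    have h2 : sphD a y ≤ 2 * ρ := by
      have : 1 / (1 + dist y a) ≤ 1 / ((1 + dist x a) / 2) :=
        one_div_le_one_div_of_le (by positivity) hy'
      rw [hρ, sphD, sphD]
      calc _ ≤ _ := this
        _ = _ := by field_simp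
    have := sphHatDist_some_le a x y
    change sphHatDist a (some x) (some y) < _
    linarith
  have h2 : sphMeas a q μ {y : Option X | sphHatDist a (some x) y < ρ / 2} ≤
      ∫⁻ y in {y | (1 + dist x a) / 2 ≤ 1 + dist y a ∧ 1 + dist y a < 2 * (1 + dist x a)},
        ENNReal.ofReal (((1 + dist y a) ^ q)⁻¹) ∂μ := by
    refine lintegral_mono_set fun y hy => ?_
    have hy' : sphHatDist a (some x) (some y) < ρ / 2 := hy
    have h3 := abs_lt.1 ((abs_sphDhat_sub_le_sphHatDist a (some x) (some y)).trans_lt hy')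
    simp only [sphDhat, ← hρ] at h3
    have hS : 0 < 1 + dist y a := by positivity
    have h4 : ρ * (1 + dist x a) = 1 := by rw [hρ, sphD]; field_simp
    have h5 : sphD a y * (1 + dist y a) = 1 := by rw [sphD]; field_simp
    refine ⟨?_, ?_⟩
    · by_contra! h
      nlinarith [mul_pos hρpos hS]
    · by_contra! h
      nlinarith [mul_pos hρpos hS]
  calc _ ≤ _ := h1
    _ ≤ _ := hdoubhat _ _ (by positivity)
    _ ≤ ENNReal.ofReal Chat * (ENNReal.ofReal Chat * (ENNReal.ofReal Chat * _)) := by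
      gcongr
      refine (hdoubhat _ _ (by positivity)).trans ?_
      gcongr
      exact (hdoubhat _ _ (by positivity)).trans (mul_le_mul_right h2 _)
    _ = _ := by rw [ENNReal.ofReal_pow (by linarith)]; ring

/-- A doubling measure is comparable on concentric balls of comparable radii. -/
theorem exists_measure_ball_mul_le [MetricSpace X] [MeasurableSpace X] (μ : Measure X)
    (Cμ : ℝ) (hCμ : 1 < Cμ)
    (hdoub : ∀ (x : X) (r : ℝ), 0 < r →
      μ (ball x (2 * r)) ≤ ENNReal.ofReal Cμ * μ (ball x r)) (L : ℝ) :
    ∃ D : ℝ, 0 < D ∧ ∀ (x : X) (r : ℝ), 0 < r →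
      μ (ball x (L * r)) ≤ ENNReal.ofReal D * μ (ball x r) := by
  obtain ⟨k, hk⟩ := pow_unbounded_of_one_lt L one_lt_two
  refine ⟨Cμ ^ k, by positivity, fun x r hr => ?_⟩
  have hpow : ∀ n : ℕ, μ (ball x (2 ^ n * r)) ≤ ENNReal.ofReal (Cμ ^ n) * μ (ball x r) := by
    intro n
    induction n with
    | zero => simp
    | succ n ih =>
      rw [pow_succ', mul_assoc, pow_succ', ENNReal.ofReal_mul (by positivity), mul_assoc]
      exact (hdoub _ _ (by positivity)).trans (by gcongr)
  exact (measure_mono (ball_subset_ball (by gcongr))).trans (hpow k)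

/-- An antitone function that contracts by a factor `θ < 1` at each dilation by `Λ` decays at
a power rate, with an exponent below any prescribed `q > 0`. -/
theorem exists_rpow_decay {f : ℝ → ℝ} {Λ θ q : ℝ} (hΛ : 1 < Λ) (hθ : θ < 1)
    (hq : 0 < q) (hf : ∀ r, 0 ≤ f r) (hanti : Antitone f)
    (hstep : ∀ r, 1 ≤ r → f (Λ * r) ≤ θ * f r) :
    ∃ δ C : ℝ, 0 < δ ∧ δ < q ∧ 0 < C ∧
      ∀ r R, 1 ≤ r → r ≤ R → R ^ δ * f R ≤ C * (r ^ δ * f r) := by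
  have hΛ0 : 0 < Λ := by linarith
  obtain ⟨δ, ⟨hδ0, hδq⟩, hδ⟩ : ∃ δ, δ ∈ Ioo 0 q ∧ Λ ^ δ * θ < 1 := by
    have hc : ContinuousAt (fun δ : ℝ => Λ ^ δ * θ) 0 :=
      (Real.continuousAt_const_rpow hΛ0.ne').mul continuousAt_const
    have h1 : ∀ᶠ δ in nhdsWithin (0 : ℝ) (Ioi 0), Λ ^ δ * θ < 1 :=
      (hc.eventually_lt continuousAt_const (by simpa using hθ)).filter_mono nhdsWithin_le_nhds
    exact (Filter.Eventually.and (Ioo_mem_nhdsGT hq) h1).exists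
  refine ⟨δ, Λ ^ δ, hδ0, hδq, by positivity, fun r R hr hrR => ?_⟩
  have main : ∀ n : ℕ, ∀ R, r ≤ R → R ≤ Λ ^ n * r →
      R ^ δ * f R ≤ Λ ^ δ * (r ^ δ * f r) := by
    have hbase : ∀ R, r ≤ R → R ≤ Λ * r → R ^ δ * f R ≤ Λ ^ δ * (r ^ δ * f r) := by
      intro R h1 h2
      rw [← mul_assoc, ← Real.mul_rpow hΛ0.le (by linarith)]
      have := hf R
      have := Real.rpow_le_rpow (by linarith) h2 hδ0.le
      have := hanti h1
      have : 0 ≤ R := by linarith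
      gcongr
    intro n
    induction n with
    | zero => exact fun R h1 h2 => hbase R h1 (by nlinarith)
    | succ n ih =>
      intro R h1 h2
      rcases le_total R (Λ * r) with h | h
      · exact hbase R h1 h
      · have h3 : r ≤ R / Λ := by rw [le_div_iff₀ hΛ0]; linarith
        have h4 : R / Λ ≤ Λ ^ n * r := by
          rw [div_le_iff₀ hΛ0]; rw [pow_succ] at h2; linarith
        refine le_trans ?_ (ih _ h3 h4)
        have h5 := hstep (R / Λ) (by linarith)
        have hR : R = Λ * (R / Λ) := by field_simp
        have h6 : 0 ≤ R / Λ := by linarith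
        generalize R / Λ = u at *
        subst hR
        rw [Real.mul_rpow hΛ0.le h6]
        have h7 : 0 ≤ u ^ δ := by positivity
        have h8 : 0 ≤ Λ ^ δ := by positivity
        calc Λ ^ δ * u ^ δ * f (Λ * u) ≤ Λ ^ δ * u ^ δ * (θ * f u) := by gcongr
          _ = (Λ ^ δ * θ) * (u ^ δ * f u) := by ring
          _ ≤ 1 * (u ^ δ * f u) := by
            have := mul_nonneg h7 (hf u)
            gcongr
          _ = _ := one_mul _
  obtain ⟨n, hn⟩ := pow_unbounded_of_one_lt (R / r) hΛ
  refine main n R hrR ?_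
  rw [div_lt_iff₀ (by linarith)] at hn
  exact hn.le

theorem measurableSet_annulus [MetricSpace X] [MeasurableSpace X] [BorelSpace X] (a : X)
    (s t : ℝ) : MeasurableSet {y : X | s ≤ 1 + dist y a ∧ 1 + dist y a < t} := by
  have h : Continuous fun y : X => 1 + dist y a := by fun_prop
  exact (isClosed_le continuous_const h).measurableSet.inter
    (isOpen_lt h continuous_const).measurableSet

/-- The tail of `μ̂_q` is bounded above by `r ^ (-q) * μ (B (a, r))`. -/
theorem exists_sphTail_le [MetricSpace X] [MeasurableSpace X] [BorelSpace X]
    (a : X) (μ : Measure X) (κ : ℝ)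
    (hup : ∀ r : ℝ, 1 ≤ r → (ball a (κ * r) \ ball a r).Nonempty)
    (Cμ : ℝ) (hCμ : 1 < Cμ)
    (hdoub : ∀ (x : X) (r : ℝ), 0 < r →
      μ (ball x (2 * r)) ≤ ENNReal.ofReal Cμ * μ (ball x r))
    (q : ℝ) (hq : 0 < q) (Chat : ℝ) (hChat : 1 < Chat)
    (hdoubhat : ∀ (x : Option X) (r : ℝ), 0 < r →
      sphMeas a q μ {y : Option X | sphHatDist a x y < 2 * r} ≤
        ENNReal.ofReal Chat * sphMeas a q μ {y : Option X | sphHatDist a x y < r}) :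
    ∃ C : ℝ, 0 < C ∧ ∀ r, 1 ≤ r →
      sphTail a q μ (κ * r) ≤ ENNReal.ofReal (C * (r ^ q)⁻¹) * μ (ball a r) := by
  obtain ⟨D, hD, hball⟩ := exists_measure_ball_mul_le μ Cμ hCμ hdoub (4 * κ)
  refine ⟨Chat ^ 3 * ((1 / 2) ^ q)⁻¹ * D, by positivity, fun r hr => ?_⟩
  obtain ⟨x, hx1, hx2⟩ := hup r hr
  simp only [mem_ball, not_lt] at hx1 hx2
  have hκr : 1 ≤ κ * r := by linarith
  calc sphTail a q μ (κ * r) ≤ sphTail a q μ ((1 + dist x a) / 2) :=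
        sphTail_anti a q μ (by linarith)
    _ ≤ _ := sphTail_le_annulus a μ q Chat hChat hdoubhat x
    _ ≤ ENNReal.ofReal (Chat ^ 3) * (ENNReal.ofReal ((1 / 2 * r) ^ q)⁻¹ *
          μ (ball a (4 * κ * r))) := by
      gcongr
      refine (setLIntegral_mono' (measurableSet_annulus a _ _)
        (g := fun _ => ENNReal.ofReal ((1 / 2 * r) ^ q)⁻¹) fun y hy => ?_).trans ?_
      · have := hy.1
        gcongr
        linarith
      · rw [setLIntegral_const]
        gcongr
        intro y hy
        have := hy.2
        rw [mem_ball]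
        linarith
    _ ≤ ENNReal.ofReal (Chat ^ 3) * (ENNReal.ofReal ((1 / 2 * r) ^ q)⁻¹ *
          (ENNReal.ofReal D * μ (ball a r))) := by
      gcongr
      exact hball a r (by linarith)
    _ = _ := by
      rw [← mul_assoc, ← mul_assoc, ← ENNReal.ofReal_mul (by positivity),
        ← ENNReal.ofReal_mul (by positivity), Real.mul_rpow (by norm_num) (by linarith),
        mul_inv]
      congr 2
      ring

/-- The tail of `μ̂_q` is bounded below by `r ^ (-q) * μ (B (a, r))`. -/
theorem exists_le_sphTail [MetricSpace X] [MeasurableSpace X] [BorelSpace X]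
    (a : X) (μ : Measure X) (κ : ℝ) (hκ : 1 < κ)
    (hup : ∀ r : ℝ, 1 ≤ r → (ball a (κ * r) \ ball a r).Nonempty)
    (Cμ : ℝ) (hCμ : 1 < Cμ)
    (hdoub : ∀ (x : X) (r : ℝ), 0 < r →
      μ (ball x (2 * r)) ≤ ENNReal.ofReal Cμ * μ (ball x r))
    (q : ℝ) (hq : 0 < q) :
    ∃ c : ℝ, 0 < c ∧ ∀ r, 1 ≤ r →
      ENNReal.ofReal (c * (r ^ q)⁻¹) * μ (ball a r) ≤ sphTail a q μ (κ * r) := by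
  obtain ⟨D, hD, hball⟩ := exists_measure_ball_mul_le μ Cμ hCμ hdoub (2 * κ + 1)
  refine ⟨((4 * κ ^ 2) ^ q)⁻¹ * D⁻¹, by positivity, fun r hr => ?_⟩
  have hκr : κ ≤ κ * r := by nlinarith
  obtain ⟨x, hx1, hx2⟩ := hup (2 * (κ * r)) (by nlinarith)
  simp only [mem_ball, not_lt] at hx1 hx2
  have hκ2 : κ * r ≤ κ ^ 2 * r := by nlinarith
  have h1 : μ (ball a r) ≤ ENNReal.ofReal D * μ (ball x (κ * r)) := by
    refine (measure_mono (ball_subset_ball' ?_)).trans (hball x (κ * r) (by linarith))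
    rw [dist_comm]
    nlinarith
  calc ENNReal.ofReal (((4 * κ ^ 2) ^ q)⁻¹ * D⁻¹ * (r ^ q)⁻¹) * μ (ball a r)
      ≤ ENNReal.ofReal (((4 * κ ^ 2) ^ q)⁻¹ * D⁻¹ * (r ^ q)⁻¹) *
        (ENNReal.ofReal D * μ (ball x (κ * r))) := by gcongr
    _ = ENNReal.ofReal ((4 * κ ^ 2 * r) ^ q)⁻¹ * μ (ball x (κ * r)) := by
      rw [← mul_assoc, ← ENNReal.ofReal_mul (by positivity),
        Real.mul_rpow (by positivity : (0 : ℝ) ≤ 4 * κ ^ 2) (by linarith : (0 : ℝ) ≤ r)]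
      congr 2
      field_simp
    _ = ∫⁻ _ in ball x (κ * r), ENNReal.ofReal ((4 * κ ^ 2 * r) ^ q)⁻¹ ∂μ :=
      (setLIntegral_const _ _).symm
    _ ≤ ∫⁻ y in ball x (κ * r), ENNReal.ofReal (((1 + dist y a) ^ q)⁻¹) ∂μ := by
      refine setLIntegral_mono' measurableSet_ball fun y hy => ?_
      rw [mem_ball] at hy
      have := dist_triangle y x a
      gcongr
      nlinarith
    _ ≤ _ := by
      refine lintegral_mono_set fun y hy => ?_
      rw [mem_ball] at hy
      have := dist_triangle_left x a y
      change κ * r ≤ 1 + dist y a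
      linarith

/-- The tail of `μ̂_q` loses a fixed proportion of its mass at each dilation by `6 * κ`. -/
theorem sphTail_dilation_le [MetricSpace X] [MeasurableSpace X] [BorelSpace X]
    (a : X) (μ : Measure X) (κ : ℝ) (hκ : 1 < κ)
    (hup : ∀ r : ℝ, 1 ≤ r → (ball a (κ * r) \ ball a r).Nonempty)
    (q : ℝ) (Chat : ℝ) (hChat : 1 < Chat)
    (hdoubhat : ∀ (x : Option X) (r : ℝ), 0 < r →
      sphMeas a q μ {y : Option X | sphHatDist a x y < 2 * r} ≤
        ENNReal.ofReal Chat * sphMeas a q μ {y : Option X | sphHatDist a x y < r})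
    (r : ℝ) (hr : 1 ≤ r) (hfinite : sphTail a q μ (κ * r) ≠ ⊤) :
    (sphTail a q μ (κ * (6 * κ * r))).toReal ≤
      (1 - (Chat ^ 3)⁻¹) * (sphTail a q μ (κ * r)).toReal := by
  have hκr : κ ≤ κ * r := by nlinarith
  obtain ⟨x, hx1, hx2⟩ := hup (2 * (κ * r)) (by nlinarith)
  simp only [mem_ball, not_lt] at hx1 hx2
  set T := 1 + dist x a with hT
  have hT0 : 0 < T := by positivity
  have hann := sphTail_le_annulus a μ q Chat hChat hdoubhat x
  rw [← hT] at hann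
  set A := ∫⁻ y in {y | T / 2 ≤ 1 + dist y a ∧ 1 + dist y a < 2 * T},
    ENNReal.ofReal (((1 + dist y a) ^ q)⁻¹) ∂μ
  have hsplit : A + sphTail a q μ (2 * T) ≤ sphTail a q μ (T / 2) := by
    have hmeas : MeasurableSet {y : X | 2 * T ≤ 1 + dist y a} :=
      (isClosed_le continuous_const (by fun_prop)).measurableSet
    rw [sphTail, ← lintegral_union hmeas]
    · refine lintegral_mono_set ?_
      rintro y (hy | hy)
      · exact hy.1
      · have hy' : 2 * T ≤ 1 + dist y a := hy
        change T / 2 ≤ 1 + dist y a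
        linarith
    · exact disjoint_left.2 fun y hy hy' => absurd hy.2 (not_lt.2 hy')
  have hle : sphTail a q μ (T / 2) ≤ sphTail a q μ (κ * r) := sphTail_anti a q μ (by linarith)
  have hle' : sphTail a q μ (κ * (6 * κ * r)) ≤ sphTail a q μ (2 * T) :=
    sphTail_anti a q μ (by nlinarith)
  have hF := ne_top_of_le_ne_top hfinite hle
  have hA : A ≠ ⊤ := ne_top_of_le_ne_top hF (le_self_add.trans hsplit)
  have hF2 : sphTail a q μ (2 * T) ≠ ⊤ := ne_top_of_le_ne_top hF (le_add_self.trans hsplit)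
  have e1 := ENNReal.toReal_mono hF hsplit
  rw [ENNReal.toReal_add hA hF2] at e1
  have e2 := ENNReal.toReal_mono (ENNReal.mul_ne_top ENNReal.ofReal_ne_top hA) hann
  have hC3 : 1 < Chat ^ 3 := one_lt_pow₀ hChat (by norm_num)
  rw [ENNReal.toReal_mul, ENNReal.toReal_ofReal (by positivity)] at e2
  have e3 : (Chat ^ 3)⁻¹ * (sphTail a q μ (T / 2)).toReal ≤ A.toReal := by
    rwa [inv_mul_le_iff₀ (by positivity)]
  have e4 : 0 ≤ 1 - (Chat ^ 3)⁻¹ := sub_nonneg.2 (inv_le_one_of_one_le₀ hC3.le)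
  calc _ ≤ (sphTail a q μ (2 * T)).toReal := ENNReal.toReal_mono hF2 hle'
    _ ≤ (1 - (Chat ^ 3)⁻¹) * (sphTail a q μ (T / 2)).toReal := by linarith
    _ ≤ _ := mul_le_mul_of_nonneg_left (ENNReal.toReal_mono hfinite hle) e4

/-- If `X` is uniformly perfect at `a` for radii `≥ 1` with
constant `κ`, `μ` is doubling, and for some `q > 0` the measure `μ̂_q` is doubling on
`(X̂, d̂)`, then there exist `0 < s < q` and `C_s > 0` such that
`μ(B(a,r))/μ(B(a,R)) ≥ C_s (r/R)^s` whenever `1 ≤ r ≤ R < ∞`. -/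
theorem statement15 [MetricSpace X] [MeasurableSpace X] [BorelSpace X]
    (hX : ¬ Bornology.IsBounded (Set.univ : Set X)) (a : X) (μ : Measure X)
    (hpos : ∀ (x : X) (r : ℝ), 0 < r → 0 < μ (Metric.ball x r))
    (hfin : ∀ (x : X) (r : ℝ), 0 < r → μ (Metric.ball x r) < ⊤)
    (κ : ℝ) (hκ : 1 < κ)
    (hup : ∀ r : ℝ, 1 ≤ r → (Metric.ball a (κ * r) \ Metric.ball a r).Nonempty)
    (Cμ : ℝ) (hCμ : 1 < Cμ)
    (hdoub : ∀ (x : X) (r : ℝ), 0 < r →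
      μ (Metric.ball x (2 * r)) ≤ ENNReal.ofReal Cμ * μ (Metric.ball x r))
    (q : ℝ) (hq : 0 < q)
    (Chat : ℝ) (hChat : 1 < Chat)
    (hdoubhat : ∀ (x : Option X) (r : ℝ), 0 < r →
      sphMeas a q μ {y : Option X | sphHatDist a x y < 2 * r} ≤
        ENNReal.ofReal Chat * sphMeas a q μ {y : Option X | sphHatDist a x y < r}) :
    ∃ s Cs : ℝ, 0 < s ∧ s < q ∧ 0 < Cs ∧
      ∀ r R : ℝ, 1 ≤ r → r ≤ R →
        ENNReal.ofReal (Cs * (r / R) ^ s) * μ (Metric.ball a R) ≤ μ (Metric.ball a r) := by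
  obtain ⟨C, hC, hupper⟩ := exists_sphTail_le a μ κ hup Cμ hCμ hdoub q hq Chat hChat hdoubhat
  obtain ⟨c, hc, hlower⟩ := exists_le_sphTail a μ κ hκ hup Cμ hCμ hdoub q hq
  have hball : ∀ r, 1 ≤ r → μ (ball a r) ≠ ⊤ := fun r hr => (hfin a r (by linarith)).ne
  have hfinite : ∀ r, 1 ≤ r → sphTail a q μ (κ * r) ≠ ⊤ := fun r hr =>
    ne_top_of_le_ne_top (ENNReal.mul_ne_top ENNReal.ofReal_ne_top (hball r hr)) (hupper r hr)
  have hC3 : 0 < (Chat ^ 3)⁻¹ := by positivity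
  obtain ⟨δ, K, hδ, hδq, hK, hdecay⟩ := exists_rpow_decay
    (f := fun r => (sphTail a q μ (κ * max 1 r)).toReal) (Λ := 6 * κ)
    (θ := 1 - (Chat ^ 3)⁻¹) (by linarith) (by linarith) hq
    (fun r => ENNReal.toReal_nonneg)
    (fun r r' h => ENNReal.toReal_mono (hfinite _ (le_max_left _ _))
      (sphTail_anti a q μ (by gcongr)))
    (fun r hr => by
      rw [max_eq_right hr, max_eq_right (by nlinarith)]
      exact sphTail_dilation_le a μ κ hκ hup q Chat hChat hdoubhat r hr (hfinite r hr))
  refine ⟨q - δ, c / (K * C), by linarith, by linarith, by positivity, fun r R hr hrR => ?_⟩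
  have hR : 1 ≤ R := hr.trans hrR
  have h1 := hdecay r R hr hrR
  simp only [max_eq_right hr, max_eq_right hR] at h1
  have h2 := ENNReal.toReal_mono (hfinite R hR) (hlower R hR)
  have h3 := ENNReal.toReal_mono
    (ENNReal.mul_ne_top ENNReal.ofReal_ne_top (hball r hr)) (hupper r hr)
  have hr0 : 0 < r := by linarith
  have hR0 : 0 < R := by linarith
  rw [ENNReal.toReal_mul, ENNReal.toReal_ofReal (by positivity)] at h2 h3
  rw [← ENNReal.ofReal_toReal (hball r hr), ← ENNReal.ofReal_toReal (hball R hR),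
    ← ENNReal.ofReal_mul (by positivity)]
  refine ENNReal.ofReal_le_ofReal ?_
  set m := (μ (ball a r)).toReal
  set M := (μ (ball a R)).toReal
  have h4 : R ^ δ * (c * (R ^ q)⁻¹ * M) ≤ K * (r ^ δ * (C * (r ^ q)⁻¹ * m)) :=
    (mul_le_mul_of_nonneg_left h2 (by positivity)).trans (h1.trans (by gcongr))
  rw [Real.div_rpow hr0.le hR0.le, Real.rpow_sub hr0, Real.rpow_sub hR0]
  have p1 : 0 < r ^ q := by positivity
  have p2 : 0 < R ^ q := by positivity
  have p3 : 0 < r ^ δ := by positivity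
  have p4 : 0 < R ^ δ := by positivity
  calc _ = (R ^ δ * (c * (R ^ q)⁻¹ * M)) * (r ^ q / (r ^ δ * K * C)) := by field_simp
    _ ≤ (K * (r ^ δ * (C * (r ^ q)⁻¹ * m))) * (r ^ q / (r ^ δ * K * C)) := by gcongr
    _ = m := by field_simp
end
end
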